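/- arXiv:2412.18803 — 3 statements merged into one kernel-verified Lean document; each statement's English description precedes it below -/
import Mathlib

section
/- For every bounded measurable weight function h : 𝒳 → ℝ, the AIPW pseudo-outcome identifies the weighted average treatment effect: E[h(X)·Γ] = E[h(X)·τ(X)]. -/
open MeasureTheory ProbabilityTheory

/-!
The residual `W * (Y - μ₁)` has conditional mean `e * μ₁ - e * μ₁ = 0` given the covariates, and it
keeps conditional mean zero after division by `e`, which is a function of the covariates; the same
holds for the control arm with `1 - W`, `1 - e` and `μ₀`. Hence the pseudo-outcome has conditional
mean `μ₁ - μ₀`, and integrating against a weight that depends only on the covariates preserves this.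
-/

section ConditionalExpectation

variable {Ω : Type*} {m mΩ : MeasurableSpace Ω} {P : Measure Ω}

theorem integral_mul_eq_of_condExp_ae_eq (hm : m ≤ mΩ) [SigmaFinite (P.trim hm)]
    {f g h : Ω → ℝ} (hh : AEStronglyMeasurable[m] h P) (hf : Integrable f P)
    (hhf : Integrable (h * f) P) (hfg : P[f | m] =ᵐ[P] g) :
    ∫ ω, h ω * f ω ∂P = ∫ ω, h ω * g ω ∂P := by
  have pull_out : P[h * f | m] =ᵐ[P] h * g :=
    (condExp_mul_of_aestronglyMeasurable_left hh hhf hf).trans (hfg.mono fun ω hω ↦ by simp [hω])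
  calc ∫ ω, h ω * f ω ∂P = ∫ ω, (P[h * f | m]) ω ∂P := (integral_condExp hm).symm
    _ = ∫ ω, h ω * g ω ∂P := integral_congr_ae pull_out

theorem condExp_one_sub_ae_eq (hm : m ≤ mΩ) [IsFiniteMeasure P] {f g : Ω → ℝ}
    (hf : Integrable f P) (hfg : P[f | m] =ᵐ[P] g) : P[1 - f | m] =ᵐ[P] 1 - g := by
  have one : P[(1 : Ω → ℝ) | m] = 1 := condExp_const hm 1
  have sub : P[1 - f | m] =ᵐ[P] P[(1 : Ω → ℝ) | m] - P[f | m] :=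
    condExp_sub (integrable_const 1) hf m
  rw [one] at sub
  exact sub.trans (.sub .rfl hfg)

theorem condExp_mul_sub_ae_eq_zero {W Y e μ : Ω → ℝ} (hW : Integrable W P)
    (hWY : Integrable (W * Y) P) (hWμ : Integrable (W * μ) P) (hμ : AEStronglyMeasurable[m] μ P)
    (hWe : P[W | m] =ᵐ[P] e) (hYμ : P[W * Y | m] =ᵐ[P] e * μ) :
    P[W * (Y - μ) | m] =ᵐ[P] 0 := by
  rw [mul_sub]
  filter_upwards [condExp_sub hWY hWμ m, condExp_mul_of_aestronglyMeasurable_right hμ hWμ hW,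
    hWe, hYμ] with ω hsub hpull hωe hωμ
  simp [hsub, hpull, hωe, hωμ]

end ConditionalExpectation

section Overlap

variable {Ω : Type*} {mΩ : MeasurableSpace Ω} {P : Measure Ω} {f e : Ω → ℝ} {η : ℝ}

theorem div_ae_eq_of_ae_eq_mul {g : Ω → ℝ} (he : ∀ᵐ ω ∂P, e ω ≠ 0) (hf : f =ᵐ[P] e * g) :
    f / e =ᵐ[P] g := by
  filter_upwards [he, hf] with ω hω hfω
  simp [hω, hfω]

theorem memLp_top_inv_of_le (he : AEStronglyMeasurable e P) (hη : 0 < η)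
    (hηe : ∀ᵐ ω ∂P, η ≤ e ω) : MemLp e⁻¹ ⊤ P := by
  refine memLp_top_of_bound he.inv₀ η⁻¹ (hηe.mono fun ω hω ↦ ?_)
  rw [Pi.inv_apply, norm_inv, Real.norm_of_nonneg (hη.le.trans hω)]
  exact inv_anti₀ hη hω

theorem integrable_div_of_le (hf : Integrable f P) (he : AEStronglyMeasurable e P) (hη : 0 < η)
    (hηe : ∀ᵐ ω ∂P, η ≤ e ω) : Integrable (f / e) P := by
  rw [div_eq_inv_mul]
  exact hf.mul_of_top_right (memLp_top_inv_of_le he hη hηe)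

end Overlap

section AIPW

variable {Ω : Type*} {m mΩ : MeasurableSpace Ω} {P : Measure Ω} {W Y e μ μ₀ μ₁ h : Ω → ℝ} {η : ℝ}

/-- One arm of a study with outcome `Y`: given the information `m`, the arm indicator `W` has
propensity `e`, bounded away from zero, and the outcome regression within the arm is `μ`. Both `e`
and `μ` are functions on `Ω`, i.e. already composed with the covariates, and `W` may be any
essentially bounded weight. -/
structure IsTreatmentArm (m : MeasurableSpace Ω) {mΩ : MeasurableSpace Ω} (P : Measure Ω)
    (W Y e μ : Ω → ℝ) : Prop where
  memLp_top : MemLp W ⊤ P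
  integrable_outcome : Integrable Y P
  overlap : ∃ η > 0, ∀ᵐ ω ∂P, η ≤ e ω
  condExp_indicator : P[W | m] =ᵐ[P] e
  condExp_outcome : P[W * Y | m] =ᵐ[P] e * μ

/-- The inverse-probability-weighted residual of one treatment arm, with indicator `W`,
propensity `e` and outcome regression `μ`; it is the correction term of the arm in `Γ`. -/
noncomputable def ipwResidual (W Y e μ : Ω → ℝ) : Ω → ℝ := W * (Y - μ) / e

/-- The AIPW pseudo-outcome `Γ`: the difference `μ₁ - μ₀` of the outcome regressions, corrected by
the inverse-probability-weighted residuals of the treated arm `(W, e, μ₁)` and of the control arm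
`(1 - W, 1 - e, μ₀)`. -/
noncomputable def aipwPseudoOutcome (W Y e μ₀ μ₁ : Ω → ℝ) : Ω → ℝ :=
  ipwResidual W Y e μ₁ + μ₁ - ipwResidual (1 - W) Y (1 - e) μ₀ - μ₀

namespace IsTreatmentArm

theorem aestronglyMeasurable_propensity (arm : IsTreatmentArm m P W Y e μ) :
    AEStronglyMeasurable[m] e P :=
  stronglyMeasurable_condExp.aestronglyMeasurable.congr arm.condExp_indicator

theorem condExp_div_propensity (arm : IsTreatmentArm m P W Y e μ) :
    P[W * Y | m] / e =ᵐ[P] μ := by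
  obtain ⟨η, hη, hηe⟩ := arm.overlap
  exact div_ae_eq_of_ae_eq_mul (hηe.mono fun _ hω ↦ (hη.trans_le hω).ne') arm.condExp_outcome

theorem aestronglyMeasurable_regression (arm : IsTreatmentArm m P W Y e μ) :
    AEStronglyMeasurable[m] μ P :=
  (stronglyMeasurable_condExp.aestronglyMeasurable.div₀ arm.aestronglyMeasurable_propensity).congr
    arm.condExp_div_propensity

theorem integrable_div_propensity (hm : m ≤ mΩ) (arm : IsTreatmentArm m P W Y e μ) {f : Ω → ℝ}
    (hf : Integrable f P) : Integrable (f / e) P := by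
  obtain ⟨η, hη, hηe⟩ := arm.overlap
  exact integrable_div_of_le hf (arm.aestronglyMeasurable_propensity.mono hm) hη hηe

theorem integrable_regression (hm : m ≤ mΩ) (arm : IsTreatmentArm m P W Y e μ) :
    Integrable μ P :=
  (arm.integrable_div_propensity hm integrable_condExp).congr arm.condExp_div_propensity

theorem integrable_residual (hm : m ≤ mΩ) (arm : IsTreatmentArm m P W Y e μ) :
    Integrable (W * (Y - μ)) P :=
  (arm.integrable_outcome.sub (arm.integrable_regression hm)).mul_of_top_right arm.memLp_top

theorem condExp_residual (hm : m ≤ mΩ) [IsFiniteMeasure P] (arm : IsTreatmentArm m P W Y e μ) :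
    P[W * (Y - μ) | m] =ᵐ[P] 0 :=
  condExp_mul_sub_ae_eq_zero (arm.memLp_top.integrable le_top)
    (arm.integrable_outcome.mul_of_top_right arm.memLp_top)
    ((arm.integrable_regression hm).mul_of_top_right arm.memLp_top)
    arm.aestronglyMeasurable_regression arm.condExp_indicator arm.condExp_outcome

theorem integrable_ipwResidual (hm : m ≤ mΩ) (arm : IsTreatmentArm m P W Y e μ) :
    Integrable (ipwResidual W Y e μ) P :=
  arm.integrable_div_propensity hm (arm.integrable_residual hm)

theorem condExp_ipwResidual (hm : m ≤ mΩ) [IsFiniteMeasure P] (arm : IsTreatmentArm m P W Y e μ) :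
    P[ipwResidual W Y e μ | m] =ᵐ[P] 0 := by
  have hipw : Integrable (W * (Y - μ) * e⁻¹) P := by
    simpa only [ipwResidual, div_eq_mul_inv] using arm.integrable_ipwResidual hm
  rw [ipwResidual, div_eq_mul_inv]
  filter_upwards [condExp_mul_of_aestronglyMeasurable_right
    arm.aestronglyMeasurable_propensity.inv₀ hipw (arm.integrable_residual hm),
    arm.condExp_residual hm] with ω hpull hzero
  simp [hpull, hzero]

theorem integrable_ipwResidual_add_regression (hm : m ≤ mΩ) (arm : IsTreatmentArm m P W Y e μ) :
    Integrable (ipwResidual W Y e μ + μ) P :=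
  (arm.integrable_ipwResidual hm).add (arm.integrable_regression hm)

theorem condExp_ipwResidual_add_regression (hm : m ≤ mΩ) [IsFiniteMeasure P]
    (arm : IsTreatmentArm m P W Y e μ) : P[ipwResidual W Y e μ + μ | m] =ᵐ[P] μ := by
  have hμ := arm.integrable_regression hm
  filter_upwards [condExp_add (arm.integrable_ipwResidual hm) hμ m, arm.condExp_ipwResidual hm,
    condExp_of_aestronglyMeasurable' hm arm.aestronglyMeasurable_regression hμ]
    with ω hadd hzero hself
  simp [hadd, hzero, hself]

end IsTreatmentArm

theorem integrable_aipwPseudoOutcome (hm : m ≤ mΩ) (treated : IsTreatmentArm m P W Y e μ₁)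
    (control : IsTreatmentArm m P (1 - W) Y (1 - e) μ₀) :
    Integrable (aipwPseudoOutcome W Y e μ₀ μ₁) P := by
  rw [aipwPseudoOutcome, sub_sub]
  exact (treated.integrable_ipwResidual_add_regression hm).sub
    (control.integrable_ipwResidual_add_regression hm)

theorem condExp_aipwPseudoOutcome (hm : m ≤ mΩ) [IsFiniteMeasure P]
    (treated : IsTreatmentArm m P W Y e μ₁) (control : IsTreatmentArm m P (1 - W) Y (1 - e) μ₀) :
    P[aipwPseudoOutcome W Y e μ₀ μ₁ | m] =ᵐ[P] μ₁ - μ₀ := by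
  rw [aipwPseudoOutcome, sub_sub]
  exact (condExp_sub (treated.integrable_ipwResidual_add_regression hm)
      (control.integrable_ipwResidual_add_regression hm) m).trans
    ((treated.condExp_ipwResidual_add_regression hm).sub
      (control.condExp_ipwResidual_add_regression hm))

theorem aipw_weighted_ate_general (hm : m ≤ mΩ) [IsFiniteMeasure P] (hW : MemLp W ⊤ P)
    (hY : Integrable Y P) (hη : 0 < η) (heη : ∀ᵐ ω ∂P, η ≤ e ω ∧ e ω ≤ 1 - η)
    (hWe : P[W | m] =ᵐ[P] e) (hYμ₁ : P[W * Y | m] =ᵐ[P] e * μ₁)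
    (hYμ₀ : P[(1 - W) * Y | m] =ᵐ[P] (1 - e) * μ₀)
    (hh : AEStronglyMeasurable[m] h P) (hhb : MemLp h ⊤ P) :
    ∫ ω, h ω * aipwPseudoOutcome W Y e μ₀ μ₁ ω ∂P = ∫ ω, h ω * (μ₁ ω - μ₀ ω) ∂P := by
  have treated : IsTreatmentArm m P W Y e μ₁ :=
    ⟨hW, hY, ⟨η, hη, heη.mono fun _ hω ↦ hω.1⟩, hWe, hYμ₁⟩
  have control : IsTreatmentArm m P (1 - W) Y (1 - e) μ₀ :=
    ⟨(memLp_const 1).sub hW, hY, ⟨η, hη, heη.mono fun _ hω ↦ le_sub_comm.mp hω.2⟩,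
      condExp_one_sub_ae_eq hm (hW.integrable le_top) hWe, hYμ₀⟩
  have hΓ := integrable_aipwPseudoOutcome hm treated control
  exact integral_mul_eq_of_condExp_ae_eq hm hh hΓ (hΓ.mul_of_top_right hhb)
    (condExp_aipwPseudoOutcome hm treated control)

end AIPW

/-- For every bounded measurable weight function `h`, the AIPW pseudo-outcome identifies the
weighted average treatment effect: `E[h(X)·Γ] = E[h(X)·τ(X)]`. -/
theorem aipw_weighted_ate
    {Ω 𝒳 : Type*} [MeasurableSpace Ω] [m𝒳 : MeasurableSpace 𝒳]
    (P : Measure Ω) [IsProbabilityMeasure P]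
    (X : Ω → 𝒳) (W Y : Ω → ℝ)
    (hX : Measurable X) (hW : Measurable W) (hY : Measurable Y)
    (hW01 : ∀ᵐ ω ∂P, W ω = 0 ∨ W ω = 1)
    (M : ℝ) (hM : 0 < M) (hYb : ∀ᵐ ω ∂P, |Y ω| ≤ M)
    (e μ₀ μ₁ : 𝒳 → ℝ)
    (he : Measurable e) (hμ₀ : Measurable μ₀) (hμ₁ : Measurable μ₁)
    (C₀ C₁ : ℝ) (hμ₀b : ∀ x, |μ₀ x| ≤ C₀) (hμ₁b : ∀ x, |μ₁ x| ≤ C₁)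
    (η : ℝ) (hη₀ : 0 < η) (hη₁ : η < 1/2)
    (heb : ∀ x, η ≤ e x ∧ e x ≤ 1 - η)
    (hce : P[W | m𝒳.comap X] =ᵐ[P] fun ω => e (X ω))
    (hc1 : P[fun ω => W ω * Y ω | m𝒳.comap X] =ᵐ[P] fun ω => e (X ω) * μ₁ (X ω))
    (hc0 : P[fun ω => (1 - W ω) * Y ω | m𝒳.comap X]
        =ᵐ[P] fun ω => (1 - e (X ω)) * μ₀ (X ω)) :
    ∀ (h : 𝒳 → ℝ) (Ch : ℝ), Measurable h → (∀ x, |h x| ≤ Ch) →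
      ∫ ω, h (X ω) * (W ω * (Y ω - μ₁ (X ω)) / e (X ω) + μ₁ (X ω)
          - (1 - W ω) * (Y ω - μ₀ (X ω)) / (1 - e (X ω)) - μ₀ (X ω)) ∂P
        = ∫ ω, h (X ω) * (μ₁ (X ω) - μ₀ (X ω)) ∂P := by
  intro h Ch hh hhb
  have hWb : MemLp W ⊤ P := memLp_top_of_bound hW.aestronglyMeasurable 1 <|
    hW01.mono fun ω hω ↦ by rcases hω with hω | hω <;> simp [hω]
  exact aipw_weighted_ate_general hX.comap_le hWb (.of_bound hY.aestronglyMeasurable M hYb) hη₀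
    (ae_of_all _ fun ω ↦ heb (X ω)) hce hc1 hc0
    (hh.comp (comap_measurable X)).stronglyMeasurable.aestronglyMeasurable
    (memLp_top_of_bound (hh.comp hX).aestronglyMeasurable Ch (ae_of_all _ fun ω ↦ hhb (X ω)))
end

section
/- With the true nuisance functions, the one-step integrand for the absolute error is unbiased: for any bounded measurable τ̂ : 𝒳 → ℝ, E[(τ(X) − τ̂(X))² + 2(τ(X) − τ̂(X))·R] = φ(τ̂), where R := W(Y − μ₁(X))/e(X) − (1−W)(Y − μ₀(X))/(1−e(X)). Equivalently, the efficient influence function ψ(φ(τ̂); Z) := (τ(X) − τ̂(X))² + 2(τ(X) − τ̂(X))·R − φ(τ̂) has mean zero. -/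
open MeasureTheory ProbabilityTheory

/-!
Given `X`, the residuals `W (Y − μ₁(X))` and `(1 − W) (Y − μ₀(X))` have conditional mean zero, and
this survives multiplication by bounded functions of `X`. Hence the inverse-probability-weighted
correction `R` is conditionally centered, and so is `(τ(X) − τ̂(X)) R`, whose integral therefore
vanishes.
-/

/-- `Z` is integrable with conditional mean zero given `m`: the notion of a residual that is
orthogonal to bounded `m`-measurable functions. Integrability is a field because `P[Z | m]` is `0`
by convention when `Z` is not integrable. -/
structure IsCondCentered {Ω : Type*} (m : MeasurableSpace Ω) {mΩ : MeasurableSpace Ω}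
    (P : Measure Ω) (Z : Ω → ℝ) : Prop where
  integrable : Integrable Z P
  condExp_ae_eq_zero : P[Z | m] =ᵐ[P] 0

section SubSigmaAlgebra

variable {Ω : Type*} {m mΩ : MeasurableSpace Ω} {P : Measure Ω}

namespace IsCondCentered

variable {Z Z' g : Ω → ℝ}

theorem integral_eq_zero (hZ : IsCondCentered m P Z) (hm : m ≤ mΩ) [SigmaFinite (P.trim hm)] :
    ∫ ω, Z ω ∂P = 0 := by
  rw [← integral_condExp hm, integral_congr_ae hZ.condExp_ae_eq_zero]
  exact integral_zero Ω ℝ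

theorem sub (hZ : IsCondCentered m P Z) (hZ' : IsCondCentered m P Z') :
    IsCondCentered m P (fun ω => Z ω - Z' ω) where
  integrable := hZ.integrable.sub hZ'.integrable
  condExp_ae_eq_zero := by
    filter_upwards [condExp_sub hZ.integrable hZ'.integrable m, hZ.condExp_ae_eq_zero,
      hZ'.condExp_ae_eq_zero] with ω hsub hω hω'
    exact hsub.trans (by simp [hω, hω'])

theorem bdd_mul (hZ : IsCondCentered m P Z) (hm : m ≤ mΩ) (hg : AEStronglyMeasurable[m] g P)
    {C : ℝ} (hgC : ∀ᵐ ω ∂P, ‖g ω‖ ≤ C) : IsCondCentered m P (fun ω => g ω * Z ω) := by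
  have hgZ : Integrable (fun ω => g ω * Z ω) P := hZ.integrable.bdd_mul (hg.mono hm) hgC
  refine ⟨hgZ, ?_⟩
  filter_upwards [condExp_mul_of_aestronglyMeasurable_left hg hgZ hZ.integrable,
    hZ.condExp_ae_eq_zero] with ω hmul hω
  exact hmul.trans (by simp [hω])

theorem div_of_le_norm (hZ : IsCondCentered m P Z) (hm : m ≤ mΩ) (hg : AEStronglyMeasurable[m] g P)
    {η : ℝ} (hη : 0 < η) (hgη : ∀ᵐ ω ∂P, η ≤ ‖g ω‖) :
    IsCondCentered m P (fun ω => Z ω / g ω) := by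
  have hinv : ∀ᵐ ω ∂P, ‖(g ω)⁻¹‖ ≤ η⁻¹ := by
    filter_upwards [hgη] with ω hω
    rw [norm_inv]
    exact inv_anti₀ hη hω
  simpa only [div_eq_inv_mul, Pi.inv_apply] using hZ.bdd_mul hm hg.inv₀ hinv

end IsCondCentered

theorem condExp_const_sub_ae_eq [IsFiniteMeasure P] (hm : m ≤ mΩ) (c : ℝ) {V p : Ω → ℝ}
    (hV : Integrable V P) (hp : P[V | m] =ᵐ[P] p) :
    P[fun ω => c - V ω | m] =ᵐ[P] fun ω => c - p ω := by
  filter_upwards [condExp_sub (integrable_const c) hV m, hp] with ω hsub hpω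
  exact hsub.trans (by simp [condExp_const hm, hpω])

theorem isCondCentered_mul_sub_of_condExp {V Y p f : Ω → ℝ} (hf : AEStronglyMeasurable[m] f P)
    (hV : Integrable V P) (hVY : Integrable (fun ω => V ω * Y ω) P)
    (hVf : Integrable (fun ω => V ω * f ω) P) (hp : P[V | m] =ᵐ[P] p)
    (hpf : P[fun ω => V ω * Y ω | m] =ᵐ[P] fun ω => p ω * f ω) :
    IsCondCentered m P (fun ω => V ω * (Y ω - f ω)) := by
  simp only [mul_sub]
  refine ⟨hVY.sub hVf, ?_⟩
  filter_upwards [condExp_sub hVY hVf m, condExp_mul_of_aestronglyMeasurable_right hf hVf hV,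
    hp, hpf] with ω hsub hpull hpω hpfω
  calc P[fun ω => V ω * Y ω - V ω * f ω | m] ω
      = P[fun ω => V ω * Y ω | m] ω - P[fun ω => V ω * f ω | m] ω := hsub
    _ = p ω * f ω - P[V | m] ω * f ω := congrArg₂ _ hpfω hpull
    _ = 0 := by rw [hpω, sub_self]

theorem isCondCentered_mul_sub_of_condExp_of_bdd [IsFiniteMeasure P] (hm : m ≤ mΩ)
    {V Y p f : Ω → ℝ} {K C : ℝ} (hV : AEStronglyMeasurable V P) (hVK : ∀ᵐ ω ∂P, ‖V ω‖ ≤ K)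
    (hY : Integrable Y P) (hf : AEStronglyMeasurable[m] f P) (hfC : ∀ᵐ ω ∂P, ‖f ω‖ ≤ C)
    (hp : P[V | m] =ᵐ[P] p) (hpf : P[fun ω => V ω * Y ω | m] =ᵐ[P] fun ω => p ω * f ω) :
    IsCondCentered m P (fun ω => V ω * (Y ω - f ω)) := by
  have hVint : Integrable V P := .of_bound hV K hVK
  exact isCondCentered_mul_sub_of_condExp hf hVint (hY.bdd_mul hV hVK)
    (hVint.mul_bdd (hf.mono hm) hfC) hp hpf

theorem integral_sq_add_two_mul_mul_of_isCondCentered [IsFiniteMeasure P] (hm : m ≤ mΩ)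
    {δ R : Ω → ℝ} (hδ : AEStronglyMeasurable[m] δ P) {C : ℝ} (hδC : ∀ᵐ ω ∂P, ‖δ ω‖ ≤ C)
    (hR : IsCondCentered m P R) :
    ∫ ω, (δ ω ^ 2 + 2 * δ ω * R ω) ∂P = ∫ ω, δ ω ^ 2 ∂P := by
  have hδR : IsCondCentered m P (fun ω => δ ω * R ω) := hR.bdd_mul hm hδ hδC
  have hδ2 : Integrable (fun ω => δ ω ^ 2) P := by
    have hδint : Integrable δ P := .of_bound (hδ.mono hm) C hδC
    simpa only [sq] using hδint.bdd_mul (hδ.mono hm) hδC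
  simp only [mul_assoc]
  rw [integral_add hδ2 (hδR.integrable.const_mul 2), integral_const_mul, hδR.integral_eq_zero hm,
    mul_zero, add_zero]

end SubSigmaAlgebra

theorem aestronglyMeasurable_comap_comp {Ω 𝒳 : Type*} [MeasurableSpace Ω]
    [m𝒳 : MeasurableSpace 𝒳] {P : Measure Ω} {X : Ω → 𝒳} {g : 𝒳 → ℝ} (hg : Measurable g) :
    AEStronglyMeasurable[m𝒳.comap X] (fun ω => g (X ω)) P :=
  (hg.comp (comap_measurable X)).aestronglyMeasurable

/-- The outcome-regression half of double robustness: `e` stands for a possibly misspecified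
propensity score. -/
theorem absolute_error_one_step_unbiased_general
    {Ω 𝒳 : Type*} [MeasurableSpace Ω] [m𝒳 : MeasurableSpace 𝒳]
    {P : Measure Ω} [IsFiniteMeasure P] {X : Ω → 𝒳} {W Y : Ω → ℝ} (hX : Measurable X)
    {e μ₀ μ₁ τhat : 𝒳 → ℝ} (he : Measurable e) (hμ₀ : Measurable μ₀) (hμ₁ : Measurable μ₁)
    (hτ : Measurable τhat) {C : ℝ} (hδC : ∀ x, |(μ₁ x - μ₀ x) - τhat x| ≤ C)
    {η : ℝ} (hη : 0 < η) (heb : ∀ x, η ≤ e x ∧ e x ≤ 1 - η)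
    (hres₁ : IsCondCentered (m𝒳.comap X) P fun ω => W ω * (Y ω - μ₁ (X ω)))
    (hres₀ : IsCondCentered (m𝒳.comap X) P fun ω => (1 - W ω) * (Y ω - μ₀ (X ω))) :
    ∫ ω, (((μ₁ (X ω) - μ₀ (X ω)) - τhat (X ω)) ^ 2
        + 2 * ((μ₁ (X ω) - μ₀ (X ω)) - τhat (X ω))
          * (W ω * (Y ω - μ₁ (X ω)) / e (X ω)
            - (1 - W ω) * (Y ω - μ₀ (X ω)) / (1 - e (X ω)))) ∂P
      = ∫ ω, (τhat (X ω) - (μ₁ (X ω) - μ₀ (X ω))) ^ 2 ∂P := by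
  have hR₁ := hres₁.div_of_le_norm hX.comap_le (aestronglyMeasurable_comap_comp he) hη
    (ae_of_all _ fun ω => (heb (X ω)).1.trans (le_abs_self _))
  have hR₀ := hres₀.div_of_le_norm hX.comap_le
    (aestronglyMeasurable_comap_comp (he.const_sub 1)) hη
    (ae_of_all _ fun ω => (le_sub_comm.1 (heb (X ω)).2).trans (le_abs_self _))
  simp only [sub_sq_comm (τhat _)]
  exact integral_sq_add_two_mul_mul_of_isCondCentered hX.comap_le
    (aestronglyMeasurable_comap_comp ((hμ₁.sub hμ₀).sub hτ)) (ae_of_all _ fun ω => hδC (X ω))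
    (hR₁.sub hR₀)

/-- With the true nuisance functions, the one-step integrand for the absolute error is
unbiased: `E[(τ(X) − τ̂(X))² + 2(τ(X) − τ̂(X))·R] = φ(τ̂)`, where
`R := W(Y − μ₁(X))/e(X) − (1−W)(Y − μ₀(X))/(1−e(X))` and `φ(τ̂) := E[(τ̂(X) − τ(X))²]`. -/
theorem absolute_error_one_step_unbiased
    {Ω 𝒳 : Type*} [MeasurableSpace Ω] [m𝒳 : MeasurableSpace 𝒳]
    (P : Measure Ω) [IsProbabilityMeasure P]
    (X : Ω → 𝒳) (W Y : Ω → ℝ)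
    (hX : Measurable X) (hW : Measurable W) (hY : Measurable Y)
    (hW01 : ∀ᵐ ω ∂P, W ω = 0 ∨ W ω = 1)
    (M : ℝ) (hM : 0 < M) (hYb : ∀ᵐ ω ∂P, |Y ω| ≤ M)
    (e μ₀ μ₁ : 𝒳 → ℝ)
    (he : Measurable e) (hμ₀ : Measurable μ₀) (hμ₁ : Measurable μ₁)
    (C₀ C₁ : ℝ) (hμ₀b : ∀ x, |μ₀ x| ≤ C₀) (hμ₁b : ∀ x, |μ₁ x| ≤ C₁)
    (η : ℝ) (hη₀ : 0 < η) (hη₁ : η < 1/2)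
    (heb : ∀ x, η ≤ e x ∧ e x ≤ 1 - η)
    (hce : P[W | m𝒳.comap X] =ᵐ[P] fun ω => e (X ω))
    (hc1 : P[fun ω => W ω * Y ω | m𝒳.comap X] =ᵐ[P] fun ω => e (X ω) * μ₁ (X ω))
    (hc0 : P[fun ω => (1 - W ω) * Y ω | m𝒳.comap X]
        =ᵐ[P] fun ω => (1 - e (X ω)) * μ₀ (X ω)) :
    ∀ (τhat : 𝒳 → ℝ) (B : ℝ), Measurable τhat → (∀ x, |τhat x| ≤ B) →
      ∫ ω, (((μ₁ (X ω) - μ₀ (X ω)) - τhat (X ω)) ^ 2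
          + 2 * ((μ₁ (X ω) - μ₀ (X ω)) - τhat (X ω))
            * (W ω * (Y ω - μ₁ (X ω)) / e (X ω)
              - (1 - W ω) * (Y ω - μ₀ (X ω)) / (1 - e (X ω)))) ∂P
        = ∫ ω, (τhat (X ω) - (μ₁ (X ω) - μ₀ (X ω))) ^ 2 ∂P := by
  intro τhat B hτ hτb
  have hYint : Integrable Y P := .of_bound hY.aestronglyMeasurable M hYb
  have hW1 : ∀ᵐ ω ∂P, ‖W ω‖ ≤ 1 := hW01.mono fun ω hω => by rcases hω with hω | hω <;> simp [hω]
  have hV1 : ∀ᵐ ω ∂P, ‖1 - W ω‖ ≤ 1 :=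
    hW01.mono fun ω hω => by rcases hω with hω | hω <;> simp [hω]
  have hcV := condExp_const_sub_ae_eq hX.comap_le 1 (.of_bound hW.aestronglyMeasurable 1 hW1) hce
  have hres₁ := isCondCentered_mul_sub_of_condExp_of_bdd hX.comap_le hW.aestronglyMeasurable hW1
    hYint (aestronglyMeasurable_comap_comp hμ₁) (ae_of_all _ fun ω => hμ₁b (X ω)) hce hc1
  have hres₀ := isCondCentered_mul_sub_of_condExp_of_bdd hX.comap_le
    (hW.const_sub 1).aestronglyMeasurable hV1 hYint (aestronglyMeasurable_comap_comp hμ₀)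
    (ae_of_all _ fun ω => hμ₀b (X ω)) hcV hc0
  have hδC (x : 𝒳) : |(μ₁ x - μ₀ x) - τhat x| ≤ (C₁ + C₀) + B :=
    (abs_sub _ _).trans (add_le_add
      ((abs_sub _ _).trans (add_le_add (hμ₁b x) (hμ₀b x))) (hτb x))
  exact absolute_error_one_step_unbiased_general hX he hμ₀ hμ₁ hτ hδC hη₀ heb hres₁ hres₀
end

section
/- Variance lower bound for the absolute error influence function (non-degeneracy under condition (c) of Theorem 1): under the additive noise model, for any bounded measurable τ̂ : 𝒳 → ℝ, Var( (τ(X) − τ̂(X))² + 2(τ(X) − τ̂(X))·R ) ≥ 16·σ²·φ(τ̂), where R := W(Y − μ₁(X))/e(X) − (1−W)(Y − μ₀(X))/(1−e(X)). In particular, if φ(τ̂) > 0 and σ² > 0, the influence function has strictly positive variance. -/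
open MeasureTheory ProbabilityTheory

/-!
Put `D = τ(X) − τ̂(X)` and `e = e(X)`. Since `W` is binary, `R` is the noise `ε` times the signed
inverse propensity weight `H = W / e − (1 − W) / (1 − e)`. As `ε` is centred and independent of
`(X, W)`, the variance of `D² + 2 D H ε` splits as `Var(D²) + 4 E[D² H²] σ²`. For binary `W`, the
difference `H² − 1 / (e (1 − e))` is an `X`-measurable multiple of `W − e`, which has conditional
mean zero; hence `E[D² H²] = E[D² / (e (1 − e))] ≥ 4 E[D²]`.
-/

/-- The signed inverse propensity (Horvitz–Thompson) weight of a unit with treatment indicator `w`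
and propensity `p`: `1 / p` for a treated unit and `-1 / (1 - p)` for a control unit. -/
noncomputable def ipwWeight (w p : ℝ) : ℝ := w / p - (1 - w) / (1 - p)

section Pointwise

variable {w p η : ℝ}

lemma ipwWeight_sq (hw : w = 0 ∨ w = 1) (hp : p ≠ 0) (hp' : 1 - p ≠ 0) :
    ipwWeight w p ^ 2
      = (p * (1 - p))⁻¹ + ((p ^ 2)⁻¹ - ((1 - p) ^ 2)⁻¹) * (w - p) := by
  rcases hw with rfl | rfl <;> simp only [ipwWeight] <;> field_simp <;> ring

lemma abs_ipwWeight_le (hw : w = 0 ∨ w = 1) (hη : 0 < η) (hp : p ∈ Set.Icc η (1 - η)) :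
    |ipwWeight w p| ≤ η⁻¹ := by
  have hp_pos : 0 < p := hη.trans_le hp.1
  have hq : η ≤ 1 - p := by linarith [hp.2]
  rcases hw with rfl | rfl
  · simpa [ipwWeight, abs_of_pos (hη.trans_le hq)] using inv_anti₀ hη hq
  · simpa [ipwWeight, abs_of_pos hp_pos] using inv_anti₀ hη hp.1

lemma four_le_inv_mul_one_sub (hp : 0 < p) (hp' : p < 1) : 4 ≤ (p * (1 - p))⁻¹ := by
  rw [le_inv_comm₀ (by norm_num) (mul_pos hp (sub_pos.2 hp'))]
  nlinarith [sq_nonneg (2 * p - 1)]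

lemma inv_mul_one_sub_le (hη : 0 < η) (hp : p ∈ Set.Icc η (1 - η)) :
    (p * (1 - p))⁻¹ ≤ (η * η)⁻¹ := by
  have hq : η ≤ 1 - p := by linarith [hp.2]
  exact inv_anti₀ (by positivity) (mul_le_mul hp.1 hq hη.le (hη.le.trans hp.1))

lemma weighted_residuals_eq_ipwWeight_mul {y m₀ m₁ u : ℝ} (hw : w = 0 ∨ w = 1)
    (hy : y = w * m₁ + (1 - w) * m₀ + u) :
    w * (y - m₁) / p - (1 - w) * (y - m₀) / (1 - p) = ipwWeight w p * u := by
  subst hy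
  rcases hw with rfl | rfl <;> simp only [ipwWeight] <;> ring

end Pointwise

section Integrability

variable {Ω 𝒳 : Type*} [MeasurableSpace Ω] [MeasurableSpace 𝒳] {P : Measure Ω}

lemma memLp_two_sq_of_memLp_four {f : Ω → ℝ} (hf : MemLp f 4 P) :
    MemLp (fun ω ↦ f ω ^ 2) 2 P := by
  rw [memLp_two_iff_integrable_sq (hf.1.fun_pow 2)]
  simpa [← pow_mul, (show Even 4 by decide).pow_abs] using hf.integrable_norm_pow (p := 4) (by simp)

lemma memLp_comp_of_abs_le [IsFiniteMeasure P] {X : Ω → 𝒳} {f : 𝒳 → ℝ} {C : ℝ} {r : ENNReal}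
    (hX : AEMeasurable X P) (hf : Measurable f) (hfC : ∀ x, |f x| ≤ C) :
    MemLp (fun ω ↦ f (X ω)) r P :=
  .of_bound (hf.comp_aemeasurable hX).aestronglyMeasurable C (ae_of_all _ fun ω ↦ hfC (X ω))

end Integrability

section Noise

variable {Ω : Type*} [MeasurableSpace Ω] {P : Measure Ω} {A B ε : Ω → ℝ}

lemma integral_mul_eq_zero_of_indepFun (hBε : IndepFun B ε P) (hB : AEStronglyMeasurable B P)
    (hε : AEStronglyMeasurable ε P) (hε_mean : ∫ ω, ε ω ∂P = 0) :
    ∫ ω, B ω * ε ω ∂P = 0 := by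
  rw [hBε.integral_fun_mul_eq_mul_integral hB hε, hε_mean, mul_zero]

lemma memLp_two_mul_of_indepFun (hBε : IndepFun B ε P) (hB : MemLp B 2 P) (hε : MemLp ε 2 P) :
    MemLp (fun ω ↦ B ω * ε ω) 2 P := by
  rw [memLp_two_iff_integrable_sq (hB.1.fun_mul hε.1)]
  have hsq : IndepFun (fun ω ↦ B ω ^ 2) (fun ω ↦ ε ω ^ 2) P :=
    hBε.comp (measurable_id.pow_const 2) (measurable_id.pow_const 2)
  simpa only [mul_pow] using! hsq.integrable_mul hB.integrable_sq hε.integrable_sq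

lemma variance_mul_of_indepFun_of_integral_eq_zero (hBε : IndepFun B ε P) (hB : MemLp B 2 P)
    (hε : MemLp ε 2 P) (hε_mean : ∫ ω, ε ω ∂P = 0) :
    Var[fun ω ↦ B ω * ε ω; P] = (∫ ω, B ω ^ 2 ∂P) * Var[ε; P] := by
  have hmean : ∫ ω, B ω * ε ω ∂P = 0 :=
    integral_mul_eq_zero_of_indepFun hBε hB.1 hε.1 hε_mean
  have hsq : IndepFun (fun ω ↦ B ω ^ 2) (fun ω ↦ ε ω ^ 2) P :=
    hBε.comp (measurable_id.pow_const 2) (measurable_id.pow_const 2)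
  rw [variance_of_integral_eq_zero (hB.1.fun_mul hε.1).aemeasurable hmean,
    variance_of_integral_eq_zero hε.1.aemeasurable hε_mean]
  simp only [mul_pow]
  exact hsq.integral_fun_mul_eq_mul_integral (hB.1.pow 2) (hε.1.pow 2)

lemma covariance_mul_eq_zero_of_indepFun_prodMk [IsProbabilityMeasure P]
    (hABε : IndepFun (fun ω ↦ (A ω, B ω)) ε P) (hA : MemLp A 2 P) (hB : MemLp B 2 P)
    (hε : MemLp ε 2 P) (hε_mean : ∫ ω, ε ω ∂P = 0) :
    cov[A, fun ω ↦ B ω * ε ω; P] = 0 := by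
  have hBε : IndepFun B ε P := hABε.comp measurable_snd measurable_id
  have hAB : IndepFun (fun ω ↦ A ω * B ω) ε P :=
    hABε.comp (measurable_fst.mul measurable_snd) measurable_id
  have hBε_mean : ∫ ω, B ω * ε ω ∂P = 0 :=
    integral_mul_eq_zero_of_indepFun hBε hB.1 hε.1 hε_mean
  have hABε_mean : ∫ ω, A ω * (B ω * ε ω) ∂P = 0 := by
    simp only [← mul_assoc]
    exact integral_mul_eq_zero_of_indepFun hAB (hA.1.fun_mul hB.1) hε.1 hε_mean
  rw [covariance_eq_sub hA (memLp_two_mul_of_indepFun hBε hB hε), hBε_mean, mul_zero, sub_zero]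
  exact hABε_mean

lemma variance_add_mul_of_indepFun_prodMk [IsProbabilityMeasure P]
    (hABε : IndepFun (fun ω ↦ (A ω, B ω)) ε P) (hA : MemLp A 2 P) (hB : MemLp B 2 P)
    (hε : MemLp ε 2 P) (hε_mean : ∫ ω, ε ω ∂P = 0) :
    Var[fun ω ↦ A ω + B ω * ε ω; P] = Var[A; P] + (∫ ω, B ω ^ 2 ∂P) * Var[ε; P] := by
  have hBε : IndepFun B ε P := hABε.comp measurable_snd measurable_id
  rw [variance_fun_add hA (memLp_two_mul_of_indepFun hBε hB hε),
    covariance_mul_eq_zero_of_indepFun_prodMk hABε hA hB hε hε_mean,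
    variance_mul_of_indepFun_of_integral_eq_zero hBε hB hε hε_mean, mul_zero, add_zero]

end Noise

section Propensity

variable {Ω : Type*} {m mΩ : MeasurableSpace Ω} {P : Measure Ω} {D W e : Ω → ℝ} {η : ℝ}

lemma integral_mul_eq_zero_of_condExp_ae_eq_zero (hm : m ≤ mΩ) [SigmaFinite (P.trim hm)]
    {k f : Ω → ℝ} (hk : AEStronglyMeasurable[m] k P) (hkf : Integrable (fun ω ↦ k ω * f ω) P)
    (hf : Integrable f P) (hf_condExp : P[f | m] =ᵐ[P] 0) :
    ∫ ω, k ω * f ω ∂P = 0 := by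
  rw [← integral_condExp hm]
  refine integral_eq_zero_of_ae ?_
  filter_upwards [condExp_mul_of_aestronglyMeasurable_left hk hkf hf, hf_condExp]
    with ω hpull hzero
  exact hpull.trans (by simp [hzero])

lemma condExp_sub_ae_eq_zero_of_condExp_ae_eq (hm : m ≤ mΩ) [SigmaFinite (P.trim hm)]
    (hW : Integrable W P) (hWe : P[W | m] =ᵐ[P] e) :
    P[fun ω ↦ W ω - e ω | m] =ᵐ[P] 0 := by
  have he : Integrable e P := integrable_condExp.congr hWe
  have he_meas : AEStronglyMeasurable[m] e P :=
    stronglyMeasurable_condExp.aestronglyMeasurable.congr hWe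
  filter_upwards [condExp_sub hW he m, hWe, condExp_of_aestronglyMeasurable' hm he_meas he]
    with ω hsub hWω heω
  exact hsub.trans (by simp [hWω, heω])

lemma integrable_of_ae_eq_zero_or_one [IsFiniteMeasure P] (hW : AEStronglyMeasurable W P)
    (hW01 : ∀ᵐ ω ∂P, W ω = 0 ∨ W ω = 1) : Integrable W P :=
  .of_bound hW 1 (hW01.mono fun _ h ↦ by rcases h with h | h <;> simp [h])

lemma memLp_mul_ipwWeight {r : ENNReal} (hD : MemLp D r P) (hW : AEStronglyMeasurable W P)
    (hW01 : ∀ᵐ ω ∂P, W ω = 0 ∨ W ω = 1) (he : AEStronglyMeasurable e P) (hη : 0 < η)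
    (heη : ∀ᵐ ω ∂P, e ω ∈ Set.Icc η (1 - η)) :
    MemLp (fun ω ↦ D ω * ipwWeight (W ω) (e ω)) r P := by
  have hH_meas : AEMeasurable (fun ω ↦ ipwWeight (W ω) (e ω)) P :=
    (hW.aemeasurable.div he.aemeasurable).sub
      ((hW.aemeasurable.const_sub 1).div (he.aemeasurable.const_sub 1))
  have hH : MemLp (fun ω ↦ ipwWeight (W ω) (e ω)) ⊤ P := by
    refine memLp_top_of_bound hH_meas.aestronglyMeasurable η⁻¹ ?_
    filter_upwards [hW01, heη] with ω hw hp using abs_ipwWeight_le hw hη hp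
  exact hH.mul' hD

lemma integrable_sq_mul_inv_mul_one_sub (hD : MemLp D 2 P) (he : AEStronglyMeasurable e P)
    (hη : 0 < η) (heη : ∀ᵐ ω ∂P, e ω ∈ Set.Icc η (1 - η)) :
    Integrable (fun ω ↦ D ω ^ 2 * (e ω * (1 - e ω))⁻¹) P := by
  refine hD.integrable_sq.mul_bdd (c := (η * η)⁻¹)
    (he.aemeasurable.mul (he.aemeasurable.const_sub 1)).inv.aestronglyMeasurable ?_
  filter_upwards [heη] with ω hp
  have hpos : 0 ≤ e ω * (1 - e ω) :=
    mul_nonneg (hη.le.trans hp.1) (by linarith [hp.2])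
  rw [Real.norm_of_nonneg (inv_nonneg.2 hpos)]
  exact inv_mul_one_sub_le hη hp

lemma integral_sq_mul_ipwWeight [IsFiniteMeasure P] (hm : m ≤ mΩ) (hD : MemLp D 2 P)
    (hD_meas : AEStronglyMeasurable[m] D P) (hW : AEStronglyMeasurable W P)
    (hW01 : ∀ᵐ ω ∂P, W ω = 0 ∨ W ω = 1) (hWe : P[W | m] =ᵐ[P] e) (hη : 0 < η)
    (heη : ∀ᵐ ω ∂P, e ω ∈ Set.Icc η (1 - η)) :
    ∫ ω, (D ω * ipwWeight (W ω) (e ω)) ^ 2 ∂P = ∫ ω, D ω ^ 2 * (e ω * (1 - e ω))⁻¹ ∂P := by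
  have he_meas : AEStronglyMeasurable[m] e P :=
    stronglyMeasurable_condExp.aestronglyMeasurable.congr hWe
  have he : AEStronglyMeasurable e P := he_meas.mono hm
  let k : Ω → ℝ := fun ω ↦ D ω ^ 2 * ((e ω ^ 2)⁻¹ - ((1 - e ω) ^ 2)⁻¹)
  have hk_meas : AEStronglyMeasurable[m] k P :=
    (hD_meas.pow 2).mul ((he_meas.pow 2).inv₀.sub
      ((aestronglyMeasurable_const.sub he_meas).pow 2).inv₀)
  have hW_int : Integrable W P := integrable_of_ae_eq_zero_or_one hW hW01
  have hlhs_int := (memLp_mul_ipwWeight hD hW hW01 he hη heη).integrable_sq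
  have hrhs_int := integrable_sq_mul_inv_mul_one_sub hD he hη heη
  have hdiff : ∀ᵐ ω ∂P, (D ω * ipwWeight (W ω) (e ω)) ^ 2 - D ω ^ 2 * (e ω * (1 - e ω))⁻¹
      = k ω * (W ω - e ω) := by
    filter_upwards [hW01, heη] with ω hw hp
    have hp₀ : e ω ≠ 0 := (hη.trans_le hp.1).ne'
    have hp₁ : 1 - e ω ≠ 0 := by linarith [hp.2]
    rw [mul_pow, ipwWeight_sq hw hp₀ hp₁]
    ring
  rw [← sub_eq_zero, ← integral_sub hlhs_int hrhs_int, integral_congr_ae hdiff]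
  exact integral_mul_eq_zero_of_condExp_ae_eq_zero hm hk_meas ((hlhs_int.sub hrhs_int).congr hdiff)
    (hW_int.sub (integrable_condExp.congr hWe))
    (condExp_sub_ae_eq_zero_of_condExp_ae_eq hm hW_int hWe)

lemma four_mul_integral_sq_le_integral_sq_mul_inv (hD : MemLp D 2 P)
    (he : AEStronglyMeasurable e P) (hη : 0 < η) (heη : ∀ᵐ ω ∂P, e ω ∈ Set.Icc η (1 - η)) :
    4 * ∫ ω, D ω ^ 2 ∂P ≤ ∫ ω, D ω ^ 2 * (e ω * (1 - e ω))⁻¹ ∂P := by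
  rw [← integral_const_mul]
  refine integral_mono_ae (hD.integrable_sq.const_mul 4)
    (integrable_sq_mul_inv_mul_one_sub hD he hη heη) ?_
  filter_upwards [heη] with ω hp
  have hfour : 4 ≤ (e ω * (1 - e ω))⁻¹ :=
    four_le_inv_mul_one_sub (hη.trans_le hp.1) (by linarith [hp.2])
  linarith [mul_le_mul_of_nonneg_left hfour (sq_nonneg (D ω))]

end Propensity

section InfluenceFunction

variable {Ω 𝒳 : Type*} [MeasurableSpace Ω] [m𝒳 : MeasurableSpace 𝒳] {P : Measure Ω}
  [IsProbabilityMeasure P] {X : Ω → 𝒳} {W ε : Ω → ℝ} {e : 𝒳 → ℝ} {η : ℝ}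

theorem variance_sq_add_ipwWeight_mul_noise {d : 𝒳 → ℝ} (hX : Measurable X)
    (hW : AEStronglyMeasurable W P) (hW01 : ∀ᵐ ω ∂P, W ω = 0 ∨ W ω = 1) (he : Measurable e)
    (hη : 0 < η) (heη : ∀ᵐ ω ∂P, e (X ω) ∈ Set.Icc η (1 - η))
    (hWe : P[W | m𝒳.comap X] =ᵐ[P] fun ω ↦ e (X ω))
    (hXWε : IndepFun (fun ω ↦ (X ω, W ω)) ε P) (hε : MemLp ε 2 P)
    (hε_mean : ∫ ω, ε ω ∂P = 0) (hd : Measurable d) (hd4 : MemLp (fun ω ↦ d (X ω)) 4 P) :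
    Var[fun ω ↦ d (X ω) ^ 2 + 2 * (d (X ω) * ipwWeight (W ω) (e (X ω))) * ε ω; P]
      = Var[fun ω ↦ d (X ω) ^ 2; P]
        + 4 * (∫ ω, d (X ω) ^ 2 * (e (X ω) * (1 - e (X ω)))⁻¹ ∂P) * Var[ε; P] := by
  have hd2 : MemLp (fun ω ↦ d (X ω)) 2 P := hd4.mono_exponent (by norm_num)
  have hd_sq : MemLp (fun ω ↦ d (X ω) ^ 2) 2 P := memLp_two_sq_of_memLp_four hd4
  have hH : MemLp (fun ω ↦ 2 * (d (X ω) * ipwWeight (W ω) (e (X ω)))) 2 P :=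
    (memLp_mul_ipwWeight hd2 hW hW01 (he.comp hX).aestronglyMeasurable hη heη).const_mul 2
  have hcoeff : Measurable fun z : 𝒳 × ℝ ↦
      (d z.1 ^ 2, 2 * (d z.1 * ipwWeight z.2 (e z.1))) := by
    unfold ipwWeight
    fun_prop
  have hindep : IndepFun (fun ω ↦ (d (X ω) ^ 2, 2 * (d (X ω) * ipwWeight (W ω) (e (X ω))))) ε P :=
    hXWε.comp hcoeff measurable_id
  have hd_meas : AEStronglyMeasurable[m𝒳.comap X] (fun ω ↦ d (X ω)) P :=
    (hd.comp (comap_measurable X)).stronglyMeasurable.aestronglyMeasurable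
  rw [variance_add_mul_of_indepFun_prodMk hindep hd_sq hH hε hε_mean,
    ← integral_sq_mul_ipwWeight hX.comap_le hd2 hd_meas hW hW01 hWe hη heη, ← integral_const_mul]
  simp only [mul_pow (2 : ℝ)]
  norm_num

theorem absolute_error_variance_lower_bound_general {Y : Ω → ℝ} {μ₀ μ₁ τhat : 𝒳 → ℝ}
    (hX : Measurable X) (hW : AEStronglyMeasurable W P) (hW01 : ∀ᵐ ω ∂P, W ω = 0 ∨ W ω = 1)
    (he : Measurable e) (hη : 0 < η) (heη : ∀ᵐ ω ∂P, e (X ω) ∈ Set.Icc η (1 - η))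
    (hWe : P[W | m𝒳.comap X] =ᵐ[P] fun ω ↦ e (X ω))
    (hXWε : IndepFun (fun ω ↦ (X ω, W ω)) ε P) (hε : MemLp ε 2 P)
    (hε_mean : ∫ ω, ε ω ∂P = 0)
    (hY : ∀ᵐ ω ∂P, Y ω = W ω * μ₁ (X ω) + (1 - W ω) * μ₀ (X ω) + ε ω)
    (hd : Measurable fun x ↦ μ₁ x - μ₀ x - τhat x)
    (hd4 : MemLp (fun ω ↦ μ₁ (X ω) - μ₀ (X ω) - τhat (X ω)) 4 P) :
    16 * Var[ε; P] * ∫ ω, (τhat (X ω) - (μ₁ (X ω) - μ₀ (X ω))) ^ 2 ∂P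
      ≤ Var[fun ω ↦ (μ₁ (X ω) - μ₀ (X ω) - τhat (X ω)) ^ 2
          + 2 * (μ₁ (X ω) - μ₀ (X ω) - τhat (X ω))
            * (W ω * (Y ω - μ₁ (X ω)) / e (X ω)
              - (1 - W ω) * (Y ω - μ₀ (X ω)) / (1 - e (X ω))); P] := by
  let d : 𝒳 → ℝ := fun x ↦ μ₁ x - μ₀ x - τhat x
  have hinfluence : ∀ᵐ ω ∂P, d (X ω) ^ 2 + 2 * d (X ω)
        * (W ω * (Y ω - μ₁ (X ω)) / e (X ω) - (1 - W ω) * (Y ω - μ₀ (X ω)) / (1 - e (X ω)))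
      = d (X ω) ^ 2 + 2 * (d (X ω) * ipwWeight (W ω) (e (X ω))) * ε ω := by
    filter_upwards [hW01, hY] with ω hw hy
    rw [weighted_residuals_eq_ipwWeight_mul hw hy]
    ring
  have hfour : 4 * ∫ ω, d (X ω) ^ 2 ∂P ≤ ∫ ω, d (X ω) ^ 2 * (e (X ω) * (1 - e (X ω)))⁻¹ ∂P :=
    four_mul_integral_sq_le_integral_sq_mul_inv (hd4.mono_exponent (by norm_num))
      (he.comp hX).aestronglyMeasurable hη heη
  simp only [sub_sq_comm (τhat _)]
  calc 16 * Var[ε; P] * ∫ ω, d (X ω) ^ 2 ∂P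
      = 4 * (4 * ∫ ω, d (X ω) ^ 2 ∂P) * Var[ε; P] := by ring
    _ ≤ 4 * (∫ ω, d (X ω) ^ 2 * (e (X ω) * (1 - e (X ω)))⁻¹ ∂P) * Var[ε; P] := by
      gcongr
      exact variance_nonneg _ _
    _ ≤ Var[fun ω ↦ d (X ω) ^ 2; P]
          + 4 * (∫ ω, d (X ω) ^ 2 * (e (X ω) * (1 - e (X ω)))⁻¹ ∂P) * Var[ε; P] :=
      le_add_of_nonneg_left (variance_nonneg _ _)
    _ = _ := by
      rw [variance_congr hinfluence,
        variance_sq_add_ipwWeight_mul_noise hX hW hW01 he hη heη hWe hXWε hε hε_mean hd hd4]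

end InfluenceFunction

/-- Variance lower bound for the absolute error influence function (non-degeneracy): under the
additive noise model, `Var((τ(X) − τ̂(X))² + 2(τ(X) − τ̂(X))·R) ≥ 16σ²·φ(τ̂)`, where
`R := W(Y − μ₁(X))/e(X) − (1−W)(Y − μ₀(X))/(1−e(X))` and `φ(τ̂) := E[(τ̂(X) − τ(X))²]`. -/
theorem absolute_error_variance_lower_bound
    {Ω 𝒳 : Type*} [MeasurableSpace Ω] [m𝒳 : MeasurableSpace 𝒳]
    (P : Measure Ω) [IsProbabilityMeasure P]
    (X : Ω → 𝒳) (W Y : Ω → ℝ)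
    (hX : Measurable X) (hW : Measurable W) (hY : Measurable Y)
    (hW01 : ∀ᵐ ω ∂P, W ω = 0 ∨ W ω = 1)
    (e μ₀ μ₁ : 𝒳 → ℝ)
    (he : Measurable e) (hμ₀ : Measurable μ₀) (hμ₁ : Measurable μ₁)
    (C₀ C₁ : ℝ) (hμ₀b : ∀ x, |μ₀ x| ≤ C₀) (hμ₁b : ∀ x, |μ₁ x| ≤ C₁)
    (η : ℝ) (hη₀ : 0 < η) (hη₁ : η < 1/2)
    (heb : ∀ x, η ≤ e x ∧ e x ≤ 1 - η)
    (hce : P[W | m𝒳.comap X] =ᵐ[P] fun ω => e (X ω))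
    (ε : Ω → ℝ) (hε : Measurable ε)
    (hindep : IndepFun (fun ω => (X ω, W ω)) ε P)
    (hε2 : MemLp ε 2 P) (hεmean : ∫ ω, ε ω ∂P = 0)
    (σ2 : ℝ) (hεvar : variance ε P = σ2)
    (hmodel : ∀ᵐ ω ∂P, Y ω = W ω * μ₁ (X ω) + (1 - W ω) * μ₀ (X ω) + ε ω) :
    ∀ (τhat : 𝒳 → ℝ) (B : ℝ), Measurable τhat → (∀ x, |τhat x| ≤ B) →
      variance (fun ω => ((μ₁ (X ω) - μ₀ (X ω)) - τhat (X ω)) ^ 2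
          + 2 * ((μ₁ (X ω) - μ₀ (X ω)) - τhat (X ω))
            * (W ω * (Y ω - μ₁ (X ω)) / e (X ω)
              - (1 - W ω) * (Y ω - μ₀ (X ω)) / (1 - e (X ω)))) P
        ≥ 16 * σ2 * ∫ ω, (τhat (X ω) - (μ₁ (X ω) - μ₀ (X ω))) ^ 2 ∂P := by
  intro τhat B hτ hτb
  subst hεvar
  exact absolute_error_variance_lower_bound_general hX hW.aestronglyMeasurable hW01 he hη₀
    (ae_of_all _ fun ω ↦ heb (X ω)) hce hindep hε2 hεmean hmodel ((hμ₁.sub hμ₀).sub hτ)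
    (((memLp_comp_of_abs_le hX.aemeasurable hμ₁ hμ₁b).sub
      (memLp_comp_of_abs_le hX.aemeasurable hμ₀ hμ₀b)).sub
      (memLp_comp_of_abs_le hX.aemeasurable hτ hτb))
end
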